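/- (Itô-like lemma for convex functions.) Let f : ℝ^d → ℝ be a convex function of at most linear growth, p : ℝ^d → ℝ^d a subgradient selection, and Q(x) the matrix of Radon–Nikodym derivatives of the absolutely continuous parts of the second derivative measures of f. Then for Lebesgue-almost every x ∈ ℝ^d: lim_{t → 0⁺} (1/t) ∫_{ℝ^d} |f(x + y) − f(x) − ⟨p(x), y⟩ − (1/2)⟨Q(x) y, y⟩| · φ_t(y) dy = 0, where φ_t(y) = (2πt)^{−d/2} exp(−‖y‖²/(2t)). -/

import Mathlib

open MeasureTheory Filter Metric
open scoped Topology ENNReal NNReal RealInnerProductSpace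

/-- The `d`-dimensional Gaussian heat kernel `φ_t`. -/
noncomputable def heatKernel (d : ℕ) (t : ℝ) (y : EuclideanSpace ℝ (Fin d)) : ℝ :=
  (2 * Real.pi * t) ^ (-(d : ℝ) / 2) * Real.exp (-‖y‖ ^ 2 / (2 * t))

/-- The second partial derivative `∂_i ∂_j φ` at `x`. -/
noncomputable def secondPartial (d : ℕ) (φ : EuclideanSpace ℝ (Fin d) → ℝ)
    (i j : Fin d) (x : EuclideanSpace ℝ (Fin d)) : ℝ :=
  fderiv ℝ (fun z => fderiv ℝ φ z (EuclideanSpace.single j 1)) x (EuclideanSpace.single i 1)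

/-- `μp, μn` represent the (signed) second derivative measures `μ_{ij} = μp i j - μn i j`
of the function `g`. -/
def IsSecondDerivMeasures (d : ℕ) (g : EuclideanSpace ℝ (Fin d) → ℝ)
    (μp μn : Fin d → Fin d → Measure (EuclideanSpace ℝ (Fin d))) : Prop :=
  (∀ i j, IsLocallyFiniteMeasure (μp i j)) ∧ (∀ i j, IsLocallyFiniteMeasure (μn i j)) ∧
  ∀ i j, ∀ φ : EuclideanSpace ℝ (Fin d) → ℝ, ContDiff ℝ (⊤ : ℕ∞) φ → HasCompactSupport φ →
    (∫ x, φ x ∂(μp i j)) - (∫ x, φ x ∂(μn i j)) = ∫ x, g x * secondPartial d φ i j x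

/-- The matrix of Radon–Nikodym derivatives of the absolutely continuous parts of the
second derivative measures. -/
noncomputable def densityMatrix (d : ℕ)
    (μp μn : Fin d → Fin d → Measure (EuclideanSpace ℝ (Fin d)))
    (x : EuclideanSpace ℝ (Fin d)) : Matrix (Fin d) (Fin d) ℝ :=
  Matrix.of fun i j =>
    ((μp i j).rnDeriv volume x).toReal - ((μn i j).rnDeriv volume x).toReal

/-- The quadratic form `⟨M y, y⟩` of a matrix `M`. -/
noncomputable def quadForm (d : ℕ) (M : Matrix (Fin d) (Fin d) ℝ)
    (y : EuclideanSpace ℝ (Fin d)) : ℝ :=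
  ∑ i, ∑ j, M i j * y i * y j


lemma density_aux {d : ℕ} (μ : Measure (EuclideanSpace ℝ (Fin d))) [IsLocallyFiniteMeasure μ] :
    ∀ᵐ x ∂(volume : Measure (EuclideanSpace ℝ (Fin d))), ∀ c : ℝ, 0 < c → ∀ κ : ℝ, 0 < κ →
      ∀ᶠ s in 𝓝[>] (0 : ℝ), ∀ η : EuclideanSpace ℝ (Fin d) → ℝ, Continuous η → (∀ w, 0 ≤ η w) →
        ∫ w, η w = 1 → (∀ w, w ∉ closedBall x s → η w = 0) →
        (∀ w, η w ≤ c / volume.real (closedBall x s)) →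
        |∫ w, η w ∂μ - (μ.rnDeriv volume x).toReal| ≤ κ := by
  set ρ : EuclideanSpace ℝ (Fin d) → ℝ := fun x => (μ.rnDeriv volume x).toReal with hρ
  have hρm : Measurable ρ := (Measure.measurable_rnDeriv _ _).ennreal_toReal
  have hloc : LocallyIntegrable ρ volume := by
    rw [locallyIntegrable_iff]
    intro K hK
    refine integrable_toReal_of_lintegral_ne_top (Measure.measurable_rnDeriv _ _).aemeasurable ?_
    exact ((Measure.setLIntegral_rnDeriv_le K).trans_lt hK.measure_lt_top).ne
  have h1 := (Besicovitch.vitaliFamily (volume : Measure (EuclideanSpace ℝ (Fin d)))).ae_eventually_measure_zero_of_singular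
    (Measure.mutuallySingular_singularPart μ volume)
  have h2 := (Besicovitch.vitaliFamily (volume : Measure (EuclideanSpace ℝ (Fin d)))).ae_tendsto_lintegral_enorm_sub_div hloc
  filter_upwards [h1, h2] with x hx1 hx2 c hc κ hκ
  replace hx1 := hx1.comp (Besicovitch.tendsto_filterAt volume x)
  replace hx2 := hx2.comp (Besicovitch.tendsto_filterAt volume x)
  have hκ' : (0 : ℝ≥0∞) < ENNReal.ofReal (κ / (2 * c)) := by
    rw [ENNReal.ofReal_pos]; positivity
  filter_upwards [hx1.eventually (gt_mem_nhds hκ'), hx2.eventually (gt_mem_nhds hκ'),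
    self_mem_nhdsWithin] with s hs1 hs2 hs0 η hηc hη0 hη1 hηs hηb
  simp only [Function.comp] at hs1 hs2
  rw [Set.mem_Ioi] at hs0
  set S := closedBall x s with hS
  have hcs : HasCompactSupport η := HasCompactSupport.intro (isCompact_closedBall x s) hηs
  have hV0 : volume S ≠ 0 := (measure_closedBall_pos _ _ hs0).ne'
  have hVt : volume S ≠ ∞ := measure_closedBall_lt_top.ne
  have hVp : 0 < volume.real S := ENNReal.toReal_pos hV0 hVt
  have : IsLocallyFiniteMeasure (μ.singularPart volume) :=
    Measure.isLocallyFiniteMeasure_of_le (Measure.singularPart_le μ volume)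
  have : IsLocallyFiniteMeasure (volume.withDensity (μ.rnDeriv volume)) :=
    Measure.isLocallyFiniteMeasure_of_le (Measure.withDensity_rnDeriv_le μ volume)
  have hen : ∀ w, ‖η w‖ₑ ≤ S.indicator (fun _ => ENNReal.ofReal (c / volume.real S)) w := by
    intro w
    by_cases hw : w ∈ S
    · rw [Set.indicator_of_mem hw, Real.enorm_eq_ofReal (hη0 w)]
      exact ENNReal.ofReal_le_ofReal (hηb w)
    · rw [hηs w hw]; simp
  have hVr : ENNReal.ofReal (c / volume.real S) = ENNReal.ofReal c / volume S := by
    rw [ENNReal.ofReal_div_of_pos hVp, measureReal_def, ENNReal.ofReal_toReal hVt]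
  -- final comparison
  have hfin : ∀ (I : ℝ) (m : ℝ≥0∞), ‖I‖ₑ ≤ ENNReal.ofReal (c / volume.real S) * m →
      m / volume S < ENNReal.ofReal (κ / (2 * c)) → |I| ≤ κ / 2 := by
    intro I m hI hm
    have : ‖I‖ₑ ≤ ENNReal.ofReal (κ / 2) := by
      calc ‖I‖ₑ ≤ ENNReal.ofReal c * (m / volume S) := by
            rw [hVr] at hI
            refine hI.trans (le_of_eq ?_)
            rw [div_eq_mul_inv, div_eq_mul_inv]; ring
        _ ≤ ENNReal.ofReal c * ENNReal.ofReal (κ / (2 * c)) := by gcongr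
        _ = ENNReal.ofReal (κ / 2) := by
            rw [← ENNReal.ofReal_mul hc.le]; congr 1; field_simp
    rw [← ofReal_norm, ENNReal.ofReal_le_ofReal_iff (by positivity)] at this
    exact this
  have e1 : ∫ w, η w ∂μ = ∫ w, η w ∂(μ.singularPart volume) + ∫ w, ρ w * η w := by
    conv_lhs => rw [μ.haveLebesgueDecomposition_add volume]
    rw [integral_add_measure (hηc.integrable_of_hasCompactSupport hcs)
      (hηc.integrable_of_hasCompactSupport hcs)]
    congr 1
    rw [integral_withDensity_eq_integral_toReal_smul (Measure.measurable_rnDeriv _ _)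
      (Measure.rnDeriv_lt_top _ _)]
    rfl
  have hint : Integrable (fun w => ρ w * η w) := by
    simpa [mul_comm] using! hloc.integrable_smul_left_of_hasCompactSupport hηc hcs
  have e2 : (∫ w, ρ w * η w) - ρ x = ∫ w, η w * (ρ w - ρ x) := by
    have : ρ x = ∫ w, ρ x * η w := by rw [integral_const_mul, hη1, mul_one]
    conv_lhs => rw [this]
    rw [← integral_sub hint ((hηc.integrable_of_hasCompactSupport hcs).const_mul _)]
    congr 1; ext w; ring
  have b1 : |∫ w, η w ∂(μ.singularPart volume)| ≤ κ / 2 := by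
    refine hfin _ _ ?_ hs1
    refine (enorm_integral_le_lintegral_enorm _).trans ?_
    refine (lintegral_mono hen).trans ?_
    rw [lintegral_indicator_const measurableSet_closedBall]
  have b2 : |∫ w, η w * (ρ w - ρ x)| ≤ κ / 2 := by
    refine hfin _ _ ?_ hs2
    refine (enorm_integral_le_lintegral_enorm _).trans ?_
    have : ∀ w, ‖η w * (ρ w - ρ x)‖ₑ ≤
        S.indicator (fun w => ENNReal.ofReal (c / volume.real S) * ‖ρ w - ρ x‖ₑ) w := by
      intro w
      rw [enorm_mul]
      refine (mul_le_mul_left (hen w) _).trans (le_of_eq ?_)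
      by_cases hw : w ∈ S <;> simp [hw]
    refine (lintegral_mono this).trans ?_
    rw [lintegral_indicator measurableSet_closedBall, lintegral_const_mul]
    exact (hρm.sub_const _).enorm
  have : ∫ w, η w ∂μ - ρ x = ∫ w, η w ∂(μ.singularPart volume) + ∫ w, η w * (ρ w - ρ x) := by
    rw [e1, ← e2]; ring
  rw [this]
  refine (abs_add_le _ _).trans ?_
  linarith


lemma core_aux {E : Type*} [NormedAddCommGroup E] [NormedSpace ℝ E]
    (g q : E → ℝ) (hg : ConvexOn ℝ Set.univ g) (hgc : ContinuousAt g 0) (hg0 : ∀ y, 0 ≤ g y)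
    (hgz : g 0 = 0) (K : ℝ) (hq : ∀ y, |q y| ≤ K * ‖y‖ ^ 2)
    (G : ℝ → E → ℝ) (L : ℝ → E →L[ℝ] ℝ)
    (hup : ∀ ε, 0 < ε → ∀ (y : E) (c : ℝ) (ℓ : E →L[ℝ] ℝ),
      (∀ w, ‖w‖ ≤ ε → g (y + w) ≤ c + ℓ w) → G ε y ≤ c)
    (hge : ∀ ε, 0 < ε → ∀ y, g y ≤ G ε y)
    (hT : ∀ δ : ℝ, 0 < δ → δ ≤ 1 → ∀ κ : ℝ, 0 < κ → ∃ r0 : ℝ, 0 < r0 ∧ ∀ r, 0 < r → r < r0 →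
      ∀ y, ‖y‖ ≤ r → |G (δ * r) y - G (δ * r) 0 - L (δ * r) y - q y| ≤ κ * r ^ 2) :
    ∀ κ : ℝ, 0 < κ → ∃ r0 : ℝ, 0 < r0 ∧ ∀ y, ‖y‖ < r0 → |g y - q y| ≤ κ * ‖y‖ ^ 2 := by
  have hqr : ∀ r y, ‖y‖ ≤ r → |q y| ≤ |K| * r ^ 2 := by
    intro r y hy
    refine (hq y).trans ?_
    have : ‖y‖ ^ 2 ≤ r ^ 2 := by gcongr
    calc K * ‖y‖ ^ 2 ≤ |K| * ‖y‖ ^ 2 := by gcongr; exact le_abs_self K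
      _ ≤ _ := by gcongr
  set C : ℝ := |K| + 1 with hC
  have hCpos : 0 < C := by positivity
  -- step 1
  obtain ⟨r1, hr1, H1⟩ := hT (1/2) (by norm_num) (by norm_num) 1 one_pos
  have s1 : ∀ r, 0 < r → r < r1 → G r 0 ≤ G (1/2 * r) 0 + C * r ^ 2 := by
    intro r hr hrr
    refine hup r hr 0 _ (L (1/2 * r)) ?_
    intro w hw
    have h1 := (abs_le.1 (H1 r hr hrr w hw)).2
    have h2 := (abs_le.1 (hqr r w hw)).2
    have h3 := hge (1/2*r) (by positivity) w
    rw [zero_add, hC]; nlinarith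
  have s1' : ∀ n : ℕ, ∀ r, 0 < r → r < r1 →
      G r 0 - 4/3 * C * r^2 ≤ G ((1/2)^n * r) 0 - 4/3 * C * ((1/2)^n * r)^2 := by
    intro n
    induction n with
    | zero => intro r _ _; simp
    | succ n ih =>
      intro r hr hrr
      have h1 := s1 r hr hrr
      have h2 := ih (1/2 * r) (by positivity) (by linarith)
      have e : ((1:ℝ)/2)^(n+1) * r = (1/2)^n * (1/2 * r) := by ring
      rw [e]
      nlinarith
  have s2 : ∀ r, 0 < r → r < r1 → G r 0 ≤ 4/3 * C * r^2 := by
    intro r hr hrr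
    by_contra hcon
    push Not at hcon
    set c := G r 0 - 4/3 * C * r^2 with hc
    have hcp : 0 < c := by linarith
    have hev : ∀ᶠ w in 𝓝 (0:E), g w < c := hgc.eventually (gt_mem_nhds (by rw [hgz]; exact hcp))
    obtain ⟨ρ, hρ, hball⟩ := Metric.eventually_nhds_iff_ball.1 hev
    have hlim : Tendsto (fun n : ℕ => ((1:ℝ)/2)^n * r) atTop (𝓝 (0 * r)) :=
      (tendsto_pow_atTop_nhds_zero_of_lt_one (by norm_num) (by norm_num)).mul_const r
    rw [zero_mul] at hlim
    obtain ⟨n, hn⟩ := (hlim.eventually (gt_mem_nhds hρ)).exists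
    have h1 := s1' n r hr hrr
    have hpos : 0 < ((1:ℝ)/2)^n * r := by positivity
    have h2 : G (((1:ℝ)/2)^n * r) 0 ≤ c := by
      refine hup _ hpos 0 c 0 ?_
      intro w hw
      simp only [zero_add, zero_apply, add_zero]
      exact (hball w (by rw [mem_ball_zero_iff]; linarith)).le
    have : 0 < 4/3 * C * (((1:ℝ)/2)^n * r)^2 := by positivity
    linarith
  -- step 2
  obtain ⟨r2, hr2, H2⟩ := hT 1 one_pos le_rfl 1 one_pos
  have s3 : ∀ r, 0 < r → r < r1 → r < r2 → ∀ y, ‖y‖ ≤ r → |L r y| ≤ 3 * C * r ^ 2 := by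
    intro r hr hrr hrr2
    have key : ∀ y, ‖y‖ ≤ r → - (3 * C * r ^ 2) ≤ L r y := by
      intro y hy
      have h1 := H2 r hr hrr2 y hy
      rw [one_mul] at h1
      have h1 := (abs_le.1 h1).2
      have h2 := (abs_le.1 (hqr r y hy)).2
      have h3 := hge r hr y
      have h4 := hg0 y
      have h5 := s2 r hr hrr
      have : 0 < C * r^2 := by positivity
      have : C * r^2 = |K| * r^2 + r^2 := by rw [hC]; ring
      nlinarith
    intro y hy
    rw [abs_le]
    refine ⟨key y hy, ?_⟩
    have := key (-y) (by rwa [norm_neg])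
    rw [map_neg] at this
    linarith
  -- step 3
  have s4 : ∀ r, 0 < r → r < r1 → r < r2 → ∀ y, ‖y‖ ≤ r → g y ≤ 6 * C * r ^ 2 := by
    intro r hr hrr hrr2 y hy
    have h1 := H2 r hr hrr2 y hy
    rw [one_mul] at h1
    have h1 := (abs_le.1 h1).2
    have h2 := (abs_le.1 (hqr r y hy)).2
    have h3 := hge r hr y
    have h4 := (abs_le.1 (s3 r hr hrr hrr2 y hy)).2
    have h5 := s2 r hr hrr
    have : 0 < C * r^2 := by positivity
    have : C * r^2 = |K| * r^2 + r^2 := by rw [hC]; ring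
    nlinarith
  -- step 4
  intro κ hκ
  obtain ⟨δ, hδ, hδ1, hδκ⟩ : ∃ δ : ℝ, 0 < δ ∧ δ ≤ 1 ∧ 30 * C * δ ≤ κ / 2 := by
    refine ⟨min 1 (κ / (60 * C)), by positivity, min_le_left _ _, ?_⟩
    calc 30 * C * min 1 (κ / (60 * C)) ≤ 30 * C * (κ / (60 * C)) := by
          gcongr; exact min_le_right _ _
      _ = κ / 2 := by field_simp; norm_num
  obtain ⟨r3, hr3, H3⟩ := hT δ hδ hδ1 (κ/2) (by positivity)
  refine ⟨min (r1/2) (min (r2/2) r3), by positivity, ?_⟩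
  intro y hy
  rw [lt_min_iff, lt_min_iff] at hy
  obtain ⟨hy1, hy2, hy3⟩ := hy
  by_cases hy0 : y = 0
  · subst hy0
    have := hq 0
    simp only [norm_zero] at this ⊢
    rw [hgz]
    have h : q 0 = 0 := by
      apply abs_nonpos_iff.1; simpa using this
    rw [h]; simp
  set r := ‖y‖ with hr
  have hrpos : 0 < r := norm_pos_iff.2 hy0
  have hε : 0 < δ * r := by positivity
  have hεr : δ * r ≤ r := by nlinarith
  have h1 := abs_le.1 (H3 r hrpos hy3 y le_rfl)
  have h2 := s2 (δ * r) hε (by linarith)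
  have h2' : 0 ≤ G (δ * r) 0 := (hg0 0).trans (hge _ hε 0)
  have h3 : |L (δ * r) y| ≤ 3 * C * δ * r ^ 2 := by
    have := s3 (δ * r) hε (by linarith) (by linarith) (δ • y) (by
      rw [norm_smul, Real.norm_of_nonneg hδ.le])
    rw [map_smul, smul_eq_mul, abs_mul, abs_of_pos hδ] at this
    have h : δ * |L (δ * r) y| ≤ δ * (3 * C * δ * r ^ 2) := by linarith
    exact le_of_mul_le_mul_left h hδ
  have h3 := abs_le.1 h3
  have h4 := hge (δ * r) hε y
  have h5 : G (δ * r) y ≤ g y + 24 * C * δ * r ^ 2 := by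
    refine hup _ hε y _ 0 ?_
    intro w hw
    simp only [zero_apply, add_zero]
    have hb := s4 (2 * r) (by positivity) (by linarith) (by linarith) (y + δ⁻¹ • w) (by
      refine (norm_add_le _ _).trans ?_
      have : ‖δ⁻¹ • w‖ ≤ r := by
        rw [norm_smul, Real.norm_of_nonneg (by positivity), inv_mul_le_iff₀ hδ]
        exact hw
      linarith)
    have hcv := hg.2 (Set.mem_univ y) (Set.mem_univ (y + δ⁻¹ • w))
      (show 0 ≤ 1 - δ by linarith) hδ.le (by ring)
    have e : (1 - δ) • y + δ • (y + δ⁻¹ • w) = y + w := by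
      rw [smul_add, smul_smul, mul_inv_cancel₀ hδ.ne', one_smul, sub_smul, one_smul]
      abel
    rw [e, smul_eq_mul, smul_eq_mul] at hcv
    have := hg0 y
    have := mul_le_mul_of_nonneg_left hb hδ.le
    nlinarith [mul_nonneg hδ.le (hg0 y)]
  have h6 : 4/3 * C * (δ * r)^2 ≤ 2 * C * δ * r^2 := by
    have : δ^2 ≤ δ := by nlinarith
    have : C * r^2 * δ^2 ≤ C * r^2 * δ := by gcongr
    nlinarith [show 0 < C * r^2 * δ by positivity]
  have h7 : 30 * C * δ * r^2 ≤ κ/2 * r^2 := by gcongr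
  have h8 : 0 < C * δ * r^2 := by positivity
  rw [abs_le]
  constructor <;> nlinarith

lemma exists_mollifier (d : ℕ) : ∃ η : ℝ → EuclideanSpace ℝ (Fin d) → ℝ, ∀ ε, 0 < ε →
    ContDiff ℝ (⊤ : ℕ∞) (η ε) ∧ HasCompactSupport (η ε) ∧ (∀ w, 0 ≤ η ε w) ∧
    (∀ w, η ε (-w) = η ε w) ∧ ∫ w, η ε w = 1 ∧ (∀ w, ε < ‖w‖ → η ε w = 0) ∧
    (∀ w, η ε w ≤ 2 ^ d / volume.real (closedBall (0 : EuclideanSpace ℝ (Fin d)) ε)) := by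
  classical
  have key : ∀ ε : ℝ, ∃ η : EuclideanSpace ℝ (Fin d) → ℝ, 0 < ε →
    ContDiff ℝ (⊤ : ℕ∞) η ∧ HasCompactSupport η ∧ (∀ w, 0 ≤ η w) ∧
    (∀ w, η (-w) = η w) ∧ ∫ w, η w = 1 ∧ (∀ w, ε < ‖w‖ → η w = 0) ∧
    (∀ w, η w ≤ 2 ^ d / volume.real (closedBall (0 : EuclideanSpace ℝ (Fin d)) ε)) := by
    intro ε
    by_cases hε : 0 < ε
    · let b : ContDiffBump (0 : EuclideanSpace ℝ (Fin d)) := ⟨ε/2, ε, by positivity, by linarith⟩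
      refine ⟨b.normed volume, fun _ => ⟨b.contDiff_normed, b.hasCompactSupport_normed,
        b.nonneg_normed, b.normed_neg, b.integral_normed, ?_, ?_⟩⟩
      · intro w hw
        rw [← Function.notMem_support, b.support_normed_eq, mem_ball_zero_iff]
        change ¬ (‖w‖ < ε)
        linarith
      · intro w
        have := b.normed_le_div_measure_closedBall_rOut volume 2 (by change ε ≤ 2 * (ε/2); linarith) w
        rwa [finrank_euclideanSpace_fin] at this
    · exact ⟨0, fun h => absurd h hε⟩
  choose η hη using key
  exact ⟨η, hη⟩

/-- mollification -/
noncomputable def moll {d : ℕ} (η f : EuclideanSpace ℝ (Fin d) → ℝ) :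
    EuclideanSpace ℝ (Fin d) → ℝ :=
  convolution η f (ContinuousLinearMap.lsmul ℝ ℝ) volume

lemma moll_eq {d : ℕ} (η f : EuclideanSpace ℝ (Fin d) → ℝ) (z : EuclideanSpace ℝ (Fin d)) :
    moll η f z = ∫ t, η t * f (z - t) := rfl

lemma moll_eq' {d : ℕ} (η f : EuclideanSpace ℝ (Fin d) → ℝ) (z : EuclideanSpace ℝ (Fin d)) :
    moll η f z = ∫ t, η (z - t) * f t := by
  unfold moll
  rw [convolution_lsmul_swap]; rfl

lemma moll_le {d : ℕ} (η f : EuclideanSpace ℝ (Fin d) → ℝ) (hη : Continuous η)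
    (hc : HasCompactSupport η) (h0 : ∀ w, 0 ≤ η w) (heven : ∀ w, η (-w) = η w)
    (h1 : ∫ w, η w = 1) (ε : ℝ) (hs : ∀ w, ε < ‖w‖ → η w = 0) (hf : Continuous f)
    (z : EuclideanSpace ℝ (Fin d)) (c : ℝ) (ℓ : EuclideanSpace ℝ (Fin d) →L[ℝ] ℝ)
    (h : ∀ w, ‖w‖ ≤ ε → f (z + w) ≤ c + ℓ w) : moll η f z ≤ c := by
  have hz : ∫ t, η t * ℓ t = 0 := by
    have := integral_neg_eq_self (fun t => η t * ℓ t) (volume : Measure (EuclideanSpace ℝ (Fin d)))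
    simp only [heven, map_neg, mul_neg, integral_neg] at this
    linarith
  have i1 : Integrable (fun t => η t * f (z - t)) := by
    refine Continuous.integrable_of_hasCompactSupport (by fun_prop) hc.mul_right
  have i2 : Integrable (fun t => η t * c) := (hη.integrable_of_hasCompactSupport hc).mul_const _
  have i3 : Integrable (fun t => η t * ℓ t) := by
    refine Continuous.integrable_of_hasCompactSupport (by fun_prop) hc.mul_right
  calc moll η f z = ∫ t, η t * f (z - t) := moll_eq _ _ _
    _ ≤ ∫ t, (η t * c - η t * ℓ t) := by
        refine integral_mono i1 (i2.sub i3) ?_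
        intro t
        by_cases ht : ‖t‖ ≤ ε
        · have := h (-t) (by rwa [norm_neg])
          rw [← sub_eq_add_neg, map_neg] at this
          have := mul_le_mul_of_nonneg_left this (h0 t)
          simp only
          linarith
        · simp [hs t (not_le.1 ht)]
    _ = c := by rw [integral_sub i2 i3, hz, integral_mul_const, h1]; ring

lemma le_moll {d : ℕ} (η f : EuclideanSpace ℝ (Fin d) → ℝ) (hη : Continuous η)
    (hc : HasCompactSupport η) (h0 : ∀ w, 0 ≤ η w) (heven : ∀ w, η (-w) = η w)
    (h1 : ∫ w, η w = 1) (ε : ℝ) (hs : ∀ w, ε < ‖w‖ → η w = 0) (hf : Continuous f)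
    (z : EuclideanSpace ℝ (Fin d)) (c : ℝ) (ℓ : EuclideanSpace ℝ (Fin d) →L[ℝ] ℝ)
    (h : ∀ w, ‖w‖ ≤ ε → c + ℓ w ≤ f (z + w)) : c ≤ moll η f z := by
  have := moll_le η (fun w => - f w) hη hc h0 heven h1 ε hs hf.neg z (-c) (-ℓ) (by
    intro w hw
    have := h w hw
    simp only [neg_apply]
    linarith)
  rw [moll_eq] at this ⊢
  simp only [mul_neg, integral_neg] at this
  linarith

lemma moll_contDiff {d : ℕ} (η f : EuclideanSpace ℝ (Fin d) → ℝ) (hη : ContDiff ℝ (⊤ : ℕ∞) η)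
    (hc : HasCompactSupport η) (hf : Continuous f) : ContDiff ℝ (⊤ : ℕ∞) (moll η f) :=
  hc.contDiff_convolution_left _ hη hf.locallyIntegrable

lemma moll_fderiv {d : ℕ} (η f : EuclideanSpace ℝ (Fin d) → ℝ) (hη : ContDiff ℝ (⊤ : ℕ∞) η)
    (hc : HasCompactSupport η) (hf : Continuous f) (v : EuclideanSpace ℝ (Fin d)) :
    (fun z => fderiv ℝ (moll η f) z v) = moll (fun w => fderiv ℝ η w v) f := by
  ext z
  have h1 : ContDiff ℝ 1 η := hη.of_le (by exact_mod_cast le_top)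
  have := (hc.hasFDerivAt_convolution_left (ContinuousLinearMap.lsmul ℝ ℝ) h1
    (hf.locallyIntegrable (μ := volume)) z).fderiv
  unfold moll
  rw [this]
  have hex : ConvolutionExistsAt (fderiv ℝ η) f z
      (ContinuousLinearMap.precompL (EuclideanSpace ℝ (Fin d)) (ContinuousLinearMap.lsmul ℝ ℝ))
      volume :=
    (hc.fderiv ℝ).convolutionExists_left _ (h1.continuous_fderiv one_ne_zero)
      hf.locallyIntegrable z
  rw [convolution, ContinuousLinearMap.integral_apply hex]
  rfl

lemma moll_secondPartial {d : ℕ} (η f : EuclideanSpace ℝ (Fin d) → ℝ)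
    (hη : ContDiff ℝ (⊤ : ℕ∞) η)
    (hc : HasCompactSupport η) (hf : Continuous f) (i j : Fin d)
    (z : EuclideanSpace ℝ (Fin d)) :
    secondPartial d (moll η f) i j z =
      ∫ w, f w * secondPartial d (fun w => η (z - w)) i j w := by
  have hη' : ContDiff ℝ (⊤ : ℕ∞) (fun w => fderiv ℝ η w (EuclideanSpace.single j 1)) :=
    (hη.fderiv_right (m := (⊤ : ℕ∞)) (by simp)).clm_apply contDiff_const
  have hneg : ∀ (h : EuclideanSpace ℝ (Fin d) → ℝ), Differentiable ℝ h → ∀ w v,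
      fderiv ℝ (fun w => h (z - w)) w v = - fderiv ℝ h (z - w) v := by
    intro h hh w v
    have h2 : HasFDerivAt (fun w : EuclideanSpace ℝ (Fin d) => z - w)
      (-ContinuousLinearMap.id ℝ _) w := (hasFDerivAt_id w).const_sub z
    have := ((hh (z - w)).hasFDerivAt.comp w h2).fderiv
    change fderiv ℝ (h ∘ fun w => z - w) w v = _
    rw [this]; simp
  unfold secondPartial
  rw [moll_fderiv η f hη hc hf]
  have := congrFun (moll_fderiv _ f hη' (hc.fderiv_apply ℝ _) hf (EuclideanSpace.single i 1)) z
  rw [this, moll_eq']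
  congr 1; ext w
  have e1 : (fun w => fderiv ℝ (fun w => η (z - w)) w (EuclideanSpace.single j 1)) =
      fun w => - fderiv ℝ η (z - w) (EuclideanSpace.single j 1) := by
    ext w; exact hneg η (hη.differentiable (by simp)) w _
  rw [e1]
  have e2 := hneg (fun w => - fderiv ℝ η w (EuclideanSpace.single j 1))
    (hη'.differentiable (by simp)).neg w (EuclideanSpace.single i 1)
  rw [e2]
  have e3 : fderiv ℝ (fun w => - fderiv ℝ η w (EuclideanSpace.single j 1)) (z - w)
     = - fderiv ℝ (fun w => fderiv ℝ η w (EuclideanSpace.single j 1)) (z - w) := by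
    exact fderiv_fun_neg
  rw [e3]; simp [mul_comm]

lemma clm_sum {d : ℕ} (L : EuclideanSpace ℝ (Fin d) →L[ℝ] ℝ) (v : EuclideanSpace ℝ (Fin d)) :
    L v = ∑ i, v i * L (EuclideanSpace.single i 1) := by
  have h := (EuclideanSpace.basisFun (Fin d) ℝ).sum_repr v
  conv_lhs => rw [← h]
  simp [map_sum]

lemma taylor1 (φ φ' φ'' : ℝ → ℝ) (h1 : ∀ s, HasDerivAt φ (φ' s) s)
    (h2 : ∀ s, HasDerivAt φ' (φ'' s) s) (M : ℝ) (hM0 : 0 ≤ M)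
    (hM : ∀ s ∈ Set.Icc (0:ℝ) 1, |φ'' s| ≤ M)
    (h0 : φ' 0 = 0) : |φ 1 - φ 0| ≤ M := by
  refine norm_image_sub_le_of_norm_deriv_le_segment_01' (f' := φ')
    (fun s _ => (h1 s).hasDerivWithinAt) ?_
  intro s hs
  have := norm_image_sub_le_of_norm_deriv_le_segment' (f := φ') (f' := φ'') (C := M) (a := 0) (b := 1)
    (fun s _ => (h2 s).hasDerivWithinAt) (fun s hs => hM s ⟨hs.1, hs.2.le⟩) s ⟨hs.1, hs.2.le⟩
  rw [h0, sub_zero, sub_zero] at this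
  refine this.trans ?_
  nlinarith [hs.1, hs.2]

lemma taylor_multi {d : ℕ} (F : EuclideanSpace ℝ (Fin d) → ℝ) (hF : ContDiff ℝ (⊤ : ℕ∞) F)
    (x y : EuclideanSpace ℝ (Fin d)) (Q : Matrix (Fin d) (Fin d) ℝ) (κ : ℝ) (hκ : 0 ≤ κ)
    (h : ∀ z, ‖z‖ ≤ ‖y‖ → ∀ i j, |secondPartial d F i j (x + z) - Q i j| ≤ κ) :
    |F (x + y) - F x - fderiv ℝ F x y - (1/2) * quadForm d Q y| ≤ κ * d ^ 2 * ‖y‖ ^ 2 := by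
  have hline : ∀ s : ℝ, HasDerivAt (fun s : ℝ => x + s • y) y s := by
    intro s
    simpa using ((hasDerivAt_id s).smul_const y).const_add x
  have hFd : Differentiable ℝ F := hF.differentiable (by simp)
  have hF' : ∀ v, Differentiable ℝ (fun w => fderiv ℝ F w v) := fun v =>
    ((hF.fderiv_right (m := (⊤ : ℕ∞)) (by simp)).clm_apply contDiff_const).differentiable (by simp)
  have hq : ∀ s : ℝ, HasDerivAt (fun s : ℝ => (1/2) * s^2 * quadForm d Q y) (s * quadForm d Q y) s := by
    intro s
    have := (((hasDerivAt_id s).pow 2).const_mul (1/2)).mul_const (quadForm d Q y)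
    convert! this using 1
    simp
  have key := taylor1
    (fun s => F (x + s • y) - s * fderiv ℝ F x y - (1/2) * s^2 * quadForm d Q y)
    (fun s => fderiv ℝ F (x + s • y) y - fderiv ℝ F x y - s * quadForm d Q y)
    (fun s => (∑ j, y j * ∑ i, y i * secondPartial d F i j (x + s • y)) - quadForm d Q y)
    (by
      intro s
      refine HasDerivAt.sub (HasDerivAt.sub ?_ ?_) (hq s)
      · exact (hFd (x + s • y)).hasFDerivAt.comp_hasDerivAt s (hline s)
      · simpa using (hasDerivAt_id s).mul_const (fderiv ℝ F x y))
    (by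
      intro s
      refine HasDerivAt.sub ?_ ?_
      · refine HasDerivAt.sub_const _ ?_
        have : (fun s : ℝ => fderiv ℝ F (x + s • y) y) =
            fun s => ∑ j, y j * fderiv ℝ F (x + s • y) (EuclideanSpace.single j 1) := by
          ext s; exact clm_sum _ _
        rw [this]
        refine HasDerivAt.fun_sum fun j _ => ?_
        refine HasDerivAt.const_mul _ ?_
        have := (hF' (EuclideanSpace.single j 1) (x + s • y)).hasFDerivAt.comp_hasDerivAt s (hline s)
        rw [clm_sum] at this
        exact this
      · simpa using (hasDerivAt_id s).mul_const (quadForm d Q y))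
    (κ * d^2 * ‖y‖^2) (by positivity)
    (by
      intro s hs
      have e : (∑ j, y j * ∑ i, y i * secondPartial d F i j (x + s • y)) - quadForm d Q y
          = ∑ i, ∑ j, (secondPartial d F i j (x + s • y) - Q i j) * y i * y j := by
        unfold quadForm
        simp_rw [Finset.mul_sum]
        rw [Finset.sum_comm, ← Finset.sum_sub_distrib]
        refine Finset.sum_congr rfl fun i _ => ?_
        rw [← Finset.sum_sub_distrib]
        refine Finset.sum_congr rfl fun j _ => ?_
        ring
      simp only
      rw [e]
      have hsy : ‖s • y‖ ≤ ‖y‖ := by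
        rw [norm_smul, Real.norm_of_nonneg hs.1]
        nlinarith [norm_nonneg y, hs.2]
      calc |∑ i, ∑ j, (secondPartial d F i j (x + s • y) - Q i j) * y i * y j|
          ≤ ∑ i, ∑ j, |(secondPartial d F i j (x + s • y) - Q i j) * y i * y j| :=
            (Finset.abs_sum_le_sum_abs _ _).trans
              (Finset.sum_le_sum fun i _ => Finset.abs_sum_le_sum_abs _ _)
        _ ≤ ∑ i : Fin d, ∑ j : Fin d, κ * ‖y‖ * ‖y‖ := by
            refine Finset.sum_le_sum fun i _ => Finset.sum_le_sum fun j _ => ?_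
            rw [abs_mul, abs_mul]
            have a1 := h _ hsy i j
            have a2 : |y i| ≤ ‖y‖ := PiLp.norm_apply_le y i
            have a3 : |y j| ≤ ‖y‖ := PiLp.norm_apply_le y j
            gcongr
        _ = κ * d^2 * ‖y‖^2 := by
            simp; ring)
    (by simp)
  simp only [one_smul, one_mul, zero_smul, add_zero, zero_mul, one_pow, mul_one, sub_zero] at key
  convert key using 2
  simp; ring

lemma quadForm_bound {d : ℕ} (Q : Matrix (Fin d) (Fin d) ℝ) (y : EuclideanSpace ℝ (Fin d)) :
    |quadForm d Q y| ≤ (∑ i, ∑ j, |Q i j|) * ‖y‖ ^ 2 := by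
  unfold quadForm
  calc |∑ i, ∑ j, Q i j * y i * y j| ≤ ∑ i, ∑ j, |Q i j * y i * y j| :=
        (Finset.abs_sum_le_sum_abs _ _).trans
              (Finset.sum_le_sum fun i _ => Finset.abs_sum_le_sum_abs _ _)
    _ ≤ ∑ i, ∑ j, |Q i j| * ‖y‖^2 := by
        refine Finset.sum_le_sum fun i _ => Finset.sum_le_sum fun j _ => ?_
        rw [abs_mul, abs_mul, pow_two, ← mul_assoc]
        have a2 : |y i| ≤ ‖y‖ := PiLp.norm_apply_le y i
        have a3 : |y j| ≤ ‖y‖ := PiLp.norm_apply_le y j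
        gcongr
    _ = _ := by simp_rw [Finset.sum_mul]

lemma heat_scale {d : ℕ} (t : ℝ) (ht : 0 < t) (u : EuclideanSpace ℝ (Fin d) → ℝ) :
    ∫ y, |u y| * heatKernel d t y = ∫ z, |u (√t • z)| * heatKernel d 1 z := by
  have hst : 0 < √t := Real.sqrt_pos.2 ht
  have h := Measure.integral_comp_smul (volume : Measure (EuclideanSpace ℝ (Fin d)))
    (fun y => |u y| * heatKernel d t y) (√t)
  rw [finrank_euclideanSpace_fin, abs_of_pos (by positivity), smul_eq_mul] at h
  have h2 : ∫ y, |u y| * heatKernel d t y =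
      √t ^ d * ∫ z, |u (√t • z)| * heatKernel d t (√t • z) := by
    rw [h, ← mul_assoc, mul_inv_cancel₀ (by positivity), one_mul]
  rw [h2, ← integral_const_mul]
  congr 1; ext z
  have h3 : √t ^ d * heatKernel d t (√t • z) = heatKernel d 1 z := by
    unfold heatKernel
    have e1 : (2 * Real.pi * t) ^ (-(d:ℝ)/2) = (2 * Real.pi * 1) ^ (-(d:ℝ)/2) * (√t ^ d)⁻¹ := by
      rw [Real.mul_rpow (by positivity) ht.le, mul_one]
      congr 1
      rw [Real.sqrt_eq_rpow, ← Real.rpow_natCast, ← Real.rpow_mul ht.le, ← Real.rpow_neg ht.le]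
      congr 1; ring
    have e2 : -‖√t • z‖ ^ 2 / (2 * t) = -‖z‖ ^ 2 / (2 * 1) := by
      rw [norm_smul, Real.norm_of_nonneg hst.le, mul_pow, Real.sq_sqrt ht.le]
      field_simp
    rw [e1, e2]
    field_simp
  rw [← h3]; ring

lemma gauss_int {d : ℕ} :
    Integrable (fun z : EuclideanSpace ℝ (Fin d) => ‖z‖ ^ 2 * heatKernel d 1 z) := by
  have h := GaussianFourier.integrable_cexp_neg_mul_sq_norm_add
    (V := EuclideanSpace ℝ (Fin d)) (b := (1/4 : ℝ)) (by simp) 0 0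
  have h2 : Integrable (fun z : EuclideanSpace ℝ (Fin d) => Real.exp (-(1/4) * ‖z‖^2)) := by
    refine h.norm.congr (Eventually.of_forall fun z => ?_)
    simp only [Complex.norm_exp]
    congr 1
    simp [← Complex.ofReal_pow]
  refine (h2.const_mul ((2 * Real.pi * 1) ^ (-(d:ℝ)/2) * 4)).mono' ?_ ?_
  · unfold heatKernel
    refine Continuous.aestronglyMeasurable ?_
    fun_prop
  · refine Eventually.of_forall fun z => ?_
    unfold heatKernel
    rw [Real.norm_of_nonneg (by positivity)]
    have e : Real.exp (-‖z‖^2 / (2 * 1)) = Real.exp (-(1/4) * ‖z‖^2) * Real.exp (-(1/4) * ‖z‖^2) := by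
      rw [← Real.exp_add]; congr 1; ring
    have b : ‖z‖^2 * Real.exp (-(1/4) * ‖z‖^2) ≤ 4 := by
      have h1 := Real.add_one_le_exp (1/4 * ‖z‖^2)
      have h3 : Real.exp (1/4 * ‖z‖^2) * Real.exp (-(1/4) * ‖z‖^2) = 1 := by
        rw [← Real.exp_add]; simp
      have h4 := Real.exp_pos (-(1/4) * ‖z‖^2)
      nlinarith
    rw [e]
    calc _ = (2 * Real.pi * 1) ^ (-(d:ℝ)/2) * (‖z‖^2 * Real.exp (-(1/4) * ‖z‖^2)) *
          Real.exp (-(1/4) * ‖z‖^2) := by ring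
      _ ≤ _ := by gcongr

lemma gauss_lim {d : ℕ} (u : EuclideanSpace ℝ (Fin d) → ℝ) (hu : Continuous u) (M : ℝ)
    (hM : ∀ y, |u y| ≤ M * ‖y‖ ^ 2)
    (hsm : ∀ κ : ℝ, 0 < κ → ∃ r0 : ℝ, 0 < r0 ∧ ∀ y, ‖y‖ < r0 → |u y| ≤ κ * ‖y‖ ^ 2) :
    Tendsto (fun t : ℝ => (1 / t) * ∫ y, |u y| * heatKernel d t y) (𝓝[>] 0) (𝓝 0) := by
  have hk : ∀ z, 0 ≤ heatKernel d 1 z := fun z => by unfold heatKernel; positivity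
  have hkc : Continuous (heatKernel d 1) := by unfold heatKernel; fun_prop
  have main : Tendsto (fun t : ℝ => ∫ z, (1 / t) * (|u (√t • z)| * heatKernel d 1 z)) (𝓝[>] 0)
      (𝓝 (∫ _ : EuclideanSpace ℝ (Fin d), (0:ℝ))) := by
    refine tendsto_integral_filter_of_dominated_convergence
      (fun z => M * (‖z‖^2 * heatKernel d 1 z)) ?_ ?_ (gauss_int.const_mul M) ?_
    · refine Eventually.of_forall fun t => Continuous.aestronglyMeasurable ?_
      fun_prop
    · filter_upwards [self_mem_nhdsWithin] with t ht
      rw [Set.mem_Ioi] at ht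
      refine Eventually.of_forall fun z => ?_
      rw [Real.norm_of_nonneg (by have := hk z; positivity)]
      have := hM (√t • z)
      rw [norm_smul, Real.norm_of_nonneg (Real.sqrt_nonneg _), mul_pow, Real.sq_sqrt ht.le] at this
      calc 1 / t * (|u (√t • z)| * heatKernel d 1 z)
          ≤ 1 / t * ((M * (t * ‖z‖^2)) * heatKernel d 1 z) := by
            have := hk z
            gcongr
        _ = _ := by field_simp
    · refine Eventually.of_forall fun z => ?_
      rw [Metric.tendsto_nhds]
      intro e he
      set D := ‖z‖^2 * heatKernel d 1 z with hD
      have hD0 : 0 ≤ D := by have := hk z; positivity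
      obtain ⟨r0, hr0, H⟩ := hsm (e / (2 * (D + 1))) (by positivity)
      have hl : Tendsto (fun t : ℝ => ‖√t • z‖) (𝓝[>] 0) (𝓝 0) := by
        have : Tendsto (fun t : ℝ => ‖√t • z‖) (𝓝 0) (𝓝 ‖√0 • z‖) := by
          apply Continuous.tendsto; fun_prop
        simp only [Real.sqrt_zero, zero_smul, norm_zero] at this
        exact this.mono_left nhdsWithin_le_nhds
      filter_upwards [self_mem_nhdsWithin, hl.eventually (gt_mem_nhds hr0)] with t ht htr
      rw [Set.mem_Ioi] at ht
      have := H _ htr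
      rw [norm_smul, Real.norm_of_nonneg (Real.sqrt_nonneg _), mul_pow, Real.sq_sqrt ht.le] at this
      rw [Real.dist_eq, sub_zero, abs_of_nonneg (by have := hk z; positivity)]
      calc 1 / t * (|u (√t • z)| * heatKernel d 1 z)
          ≤ 1 / t * ((e / (2 * (D + 1)) * (t * ‖z‖^2)) * heatKernel d 1 z) := by
            have := hk z
            gcongr
        _ = e / (2 * (D + 1)) * D := by rw [hD]; field_simp
        _ < e := by
            rw [div_mul_eq_mul_div, div_lt_iff₀ (by positivity)]
            nlinarith
  rw [integral_zero] at main
  refine main.congr' ?_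
  filter_upwards [self_mem_nhdsWithin] with t ht
  rw [heat_scale t ht, integral_const_mul]

/-- Itô-like lemma for convex functions. -/
theorem ito_like_lemma_for_convex_functions (d : ℕ)
    (f : EuclideanSpace ℝ (Fin d) → ℝ) (hf : ConvexOn ℝ Set.univ f)
    (A B : ℝ) (hgrowth : ∀ y, |f y| ≤ A * ‖y‖ + B)
    (p : EuclideanSpace ℝ (Fin d) → EuclideanSpace ℝ (Fin d))
    (hp : ∀ x y, f x + ⟪p x, y - x⟫ ≤ f y)
    (μp μn : Fin d → Fin d → Measure (EuclideanSpace ℝ (Fin d)))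
    (hμ : IsSecondDerivMeasures d f μp μn) :
    ∀ᵐ x ∂(volume : Measure (EuclideanSpace ℝ (Fin d))),
      Filter.Tendsto
        (fun t : ℝ => (1 / t) *
          ∫ y, |f (x + y) - f x - ⟪p x, y⟫ -
            (1 / 2) * quadForm d (densityMatrix d μp μn x) y| * heatKernel d t y)
        (nhdsWithin 0 (Set.Ioi 0)) (nhds 0) := by
  obtain ⟨hlp, hln, hrep⟩ := hμ
  have hfc : Continuous f := by
    rw [← continuousOn_univ]; exact hf.continuousOn isOpen_univ
  obtain ⟨η, hη⟩ := exists_mollifier d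
  have hDp : ∀ᵐ x ∂(volume : Measure (EuclideanSpace ℝ (Fin d))), ∀ i j, ∀ c : ℝ, 0 < c →
      ∀ κ : ℝ, 0 < κ →
      ∀ᶠ s in 𝓝[>] (0 : ℝ), ∀ η : EuclideanSpace ℝ (Fin d) → ℝ, Continuous η → (∀ w, 0 ≤ η w) →
        ∫ w, η w = 1 → (∀ w, w ∉ closedBall x s → η w = 0) →
        (∀ w, η w ≤ c / volume.real (closedBall x s)) →
        |∫ w, η w ∂(μp i j) - ((μp i j).rnDeriv volume x).toReal| ≤ κ := by
    rw [ae_all_iff]; intro i; rw [ae_all_iff]; intro j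
    have := hlp i j
    exact density_aux (μp i j)
  have hDn : ∀ᵐ x ∂(volume : Measure (EuclideanSpace ℝ (Fin d))), ∀ i j, ∀ c : ℝ, 0 < c →
      ∀ κ : ℝ, 0 < κ →
      ∀ᶠ s in 𝓝[>] (0 : ℝ), ∀ η : EuclideanSpace ℝ (Fin d) → ℝ, Continuous η → (∀ w, 0 ≤ η w) →
        ∫ w, η w = 1 → (∀ w, w ∉ closedBall x s → η w = 0) →
        (∀ w, η w ≤ c / volume.real (closedBall x s)) →
        |∫ w, η w ∂(μn i j) - ((μn i j).rnDeriv volume x).toReal| ≤ κ := by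
    rw [ae_all_iff]; intro i; rw [ae_all_iff]; intro j
    have := hln i j
    exact density_aux (μn i j)
  filter_upwards [hDp, hDn] with x hxp hxn
  set Q := densityMatrix d μp μn x with hQ
  set K : ℝ := ∑ i, ∑ j, |Q i j| with hK
  have hK0 : 0 ≤ K := Finset.sum_nonneg fun i _ => Finset.sum_nonneg fun j _ => abs_nonneg _
  have hqb : ∀ y, |(1/2) * quadForm d Q y| ≤ K * ‖y‖ ^ 2 := by
    intro y
    have := quadForm_bound Q y
    rw [abs_mul, abs_of_pos (by norm_num : (0:ℝ) < 1/2)]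
    have := abs_nonneg (quadForm d Q y)
    linarith
  have hqc : Continuous (fun y => quadForm d Q y) := by
    unfold quadForm; fun_prop
  -- second derivatives of the mollification
  have hsec : ∀ ε, 0 < ε → ∀ i j z, secondPartial d (moll (η ε) f) i j z =
      (∫ w, η ε (z - w) ∂(μp i j)) - ∫ w, η ε (z - w) ∂(μn i j) := by
    intro ε hε i j z
    obtain ⟨h1, h2, -⟩ := hη ε hε
    rw [moll_secondPartial _ _ h1 h2 hfc]
    refine (hrep i j (fun w => η ε (z - w)) (h1.comp (contDiff_const.sub contDiff_id)) ?_).symm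
    exact h2.comp_homeomorph (Homeomorph.subLeft z)
  have hsmall : ∀ κ : ℝ, 0 < κ → ∃ r0 : ℝ, 0 < r0 ∧ ∀ y, ‖y‖ < r0 →
      |(f (x + y) - f x - ⟪p x, y⟫) - (1/2) * quadForm d Q y| ≤ κ * ‖y‖ ^ 2 := by
    refine core_aux (fun y => f (x + y) - f x - ⟪p x, y⟫) (fun y => (1/2) * quadForm d Q y)
      ?_ ?_ ?_ ?_ K hqb (fun ε y => moll (η ε) f (x + y) - f x - ⟪p x, y⟫)
      (fun ε => fderiv ℝ (moll (η ε) f) x - innerSL ℝ (p x)) ?_ ?_ ?_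
    · refine ⟨convex_univ, ?_⟩
      intro y _ z _ a b ha hb hab
      have h := hf.2 (Set.mem_univ (x + y)) (Set.mem_univ (x + z)) ha hb hab
      have e : a • (x + y) + b • (x + z) = x + (a • y + b • z) := by
        rw [smul_add, smul_add, add_add_add_comm, ← add_smul, hab, one_smul]
      rw [e] at h
      simp only [smul_eq_mul, inner_add_right, inner_smul_right] at h ⊢
      have : f x = a * f x + b * f x := by rw [← add_mul, hab, one_mul]
      linarith
    · apply Continuous.continuousAt; fun_prop
    · intro y
      have := hp x (x + y)
      rw [add_sub_cancel_left] at this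
      linarith
    · simp
    · intro ε hε y c ℓ h
      obtain ⟨h1, h2, h3, h4, h5, h6, h7⟩ := hη ε hε
      have := moll_le (η ε) f h1.continuous h2 h3 h4 h5 ε h6 hfc (x + y) (c + f x + ⟪p x, y⟫)
        (ℓ + innerSL ℝ (p x)) (by
          intro w hw
          have := h w hw
          simp only [inner_add_right, add_apply, innerSL_apply_apply] at this ⊢
          rw [add_assoc]
          linarith)
      linarith
    · intro ε hε y
      obtain ⟨h1, h2, h3, h4, h5, h6, h7⟩ := hη ε hε
      have := le_moll (η ε) f h1.continuous h2 h3 h4 h5 ε h6 hfc (x + y) (f (x + y))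
        (innerSL ℝ (p (x + y))) (by
          intro w hw
          have := hp (x + y) (x + y + w)
          rw [add_sub_cancel_left] at this
          simpa using! this)
      linarith
    · intro δ hδ hδ1 κ hκ
      set κ' := κ / (2 * ((d:ℝ)^2 + 1)) with hκ'
      have hκ'0 : 0 < κ' := by positivity
      have hev : ∀ᶠ s in 𝓝[>] (0:ℝ), ∀ i j, ∀ η : EuclideanSpace ℝ (Fin d) → ℝ, Continuous η →
          (∀ w, 0 ≤ η w) →
          ∫ w, η w = 1 → (∀ w, w ∉ closedBall x s → η w = 0) →
          (∀ w, η w ≤ (4 / δ) ^ d / volume.real (closedBall x s)) →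
          |(∫ w, η w ∂(μp i j)) - (∫ w, η w ∂(μn i j)) - Q i j| ≤ 2 * κ' := by
        rw [eventually_all]; intro i; rw [eventually_all]; intro j
        filter_upwards [hxp i j ((4/δ)^d) (by positivity) κ' hκ'0,
          hxn i j ((4/δ)^d) (by positivity) κ' hκ'0] with s hs1 hs2 η a1 a2 a3 a4 a5
        have b1 := abs_le.1 (hs1 η a1 a2 a3 a4 a5)
        have b2 := abs_le.1 (hs2 η a1 a2 a3 a4 a5)
        rw [hQ, densityMatrix, Matrix.of_apply, abs_le]
        constructor <;> linarith
      obtain ⟨s0, hs0, hs⟩ := (mem_nhdsGT_iff_exists_Ioo_subset).1 hev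
      rw [Set.mem_Ioi] at hs0
      refine ⟨s0 / 2, by positivity, ?_⟩
      intro r hr hrr y hy
      have hε : 0 < δ * r := by positivity
      have hεr : δ * r ≤ r := by nlinarith
      obtain ⟨h1, h2, h3, h4, h5, h6, h7⟩ := hη (δ * r) hε
      have hS := hs (show 2 * r ∈ Set.Ioo 0 s0 from ⟨by positivity, by linarith⟩)
      simp only [Set.mem_ofPred_eq] at hS
      have hT := taylor_multi (moll (η (δ * r)) f) (moll_contDiff _ _ h1 h2 hfc) x y Q (2 * κ')
        (by positivity) (by
          intro z hz i j
          rw [hsec _ hε]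
          refine hS i j (fun w => η (δ * r) (x + z - w)) ?_ (fun w => h3 _) ?_ ?_ ?_
          · exact h1.continuous.comp (by fun_prop)
          · rw [integral_sub_left_eq_self (fun w => η (δ * r) w), h5]
          · intro w hw
            refine h6 _ ?_
            rw [mem_closedBall, dist_eq_norm, not_le] at hw
            have : ‖w - x‖ ≤ ‖z‖ + ‖x + z - w‖ := by
              have e : w - x = z - (x + z - w) := by abel
              rw [e]; exact norm_sub_le _ _
            linarith
          · intro w
            refine (h7 _).trans (le_of_eq ?_)
            rw [Measure.addHaar_real_closedBall _ _ hε.le,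
              Measure.addHaar_real_closedBall _ _ (by positivity : 0 ≤ 2 * r),
              finrank_euclideanSpace_fin]
            have hv : 0 < volume.real (ball (0 : EuclideanSpace ℝ (Fin d)) 1) :=
              ENNReal.toReal_pos (measure_ball_pos _ _ one_pos).ne' measure_ball_lt_top.ne
            have : (4:ℝ) ^ d = 2 ^ d * 2 ^ d := by rw [← mul_pow]; norm_num
            rw [div_pow, mul_pow, mul_pow, this]
            field_simp)
      have e : moll (η (δ * r)) f (x + y) - f x - ⟪p x, y⟫ -
          (moll (η (δ * r)) f (x + 0) - f x - ⟪p x, (0 : EuclideanSpace ℝ (Fin d))⟫) -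
          (fderiv ℝ (moll (η (δ * r)) f) x - innerSL ℝ (p x)) y - (1/2) * quadForm d Q y =
          moll (η (δ * r)) f (x + y) - moll (η (δ * r)) f x - fderiv ℝ (moll (η (δ * r)) f) x y
            - (1/2) * quadForm d Q y := by
        simp only [add_zero, inner_zero_right, sub_apply, innerSL_apply_apply]
        ring
      rw [e]
      refine hT.trans ?_
      have c1 : 2 * κ' * (d:ℝ)^2 ≤ κ := by
        rw [hκ', mul_div_assoc', div_mul_eq_mul_div, div_le_iff₀ (by positivity)]
        nlinarith
      calc 2 * κ' * (d:ℝ)^2 * ‖y‖^2 ≤ κ * ‖y‖^2 := by gcongr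
        _ ≤ κ * r^2 := by gcongr
  obtain ⟨r0, hr0, H0⟩ := hsmall 1 one_pos
  set M : ℝ := 1 + (|A| + ‖p x‖) / r0 + (|A| * ‖x‖ + |B| + |f x|) / r0 ^ 2 + K with hM
  refine gauss_lim (fun y => f (x + y) - f x - ⟪p x, y⟫ - (1/2) * quadForm d Q y) ?_ M ?_ hsmall
  · fun_prop
  · intro y
    by_cases hy : ‖y‖ < r0
    · refine (H0 y hy).trans ?_
      have : 1 ≤ M := by
        rw [hM]
        have : 0 ≤ (|A| + ‖p x‖) / r0 := by positivity
        have : 0 ≤ (|A| * ‖x‖ + |B| + |f x|) / r0 ^ 2 := by positivity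
        linarith
      gcongr
    · push Not at hy
      have h1 : |f (x + y)| ≤ |A| * (‖x‖ + ‖y‖) + |B| := by
        refine (hgrowth _).trans ?_
        have := le_abs_self A
        have := le_abs_self B
        have := norm_add_le x y
        calc A * ‖x + y‖ + B ≤ |A| * ‖x + y‖ + |B| := by gcongr
          _ ≤ _ := by gcongr
      have h2 : |⟪p x, y⟫| ≤ ‖p x‖ * ‖y‖ := abs_real_inner_le_norm _ _
      have h3 := hqb y
      have h4 : |f (x + y) - f x - ⟪p x, y⟫ - (1/2) * quadForm d Q y| ≤
          |f (x+y)| + |f x| + |⟪p x, y⟫| + |(1/2) * quadForm d Q y| := by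
        refine (abs_sub _ _).trans ?_
        gcongr
        refine (abs_sub _ _).trans ?_
        gcongr
        exact abs_sub _ _
      have h5 : ‖y‖ ≤ ‖y‖^2 / r0 := by
        rw [le_div_iff₀ hr0]; nlinarith
      have h6 : 1 ≤ ‖y‖^2 / r0^2 := by
        rw [le_div_iff₀ (by positivity), one_mul]; gcongr
      have h7 : (|A| + ‖p x‖) * ‖y‖ ≤ (|A| + ‖p x‖) * (‖y‖^2 / r0) := by gcongr
      have h8 : (|A| * ‖x‖ + |B| + |f x|) * 1 ≤ (|A| * ‖x‖ + |B| + |f x|) * (‖y‖^2 / r0^2) := by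
        gcongr
      have e : M * ‖y‖^2 = ‖y‖^2 + (|A| + ‖p x‖) * (‖y‖^2 / r0) +
          (|A| * ‖x‖ + |B| + |f x|) * (‖y‖^2 / r0^2) + K * ‖y‖^2 := by
        rw [hM]; ring
      rw [e]
      nlinarith [sq_nonneg ‖y‖]
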